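/- arXiv:2209.04058 — 2 statements merged into one kernel-verified Lean document; each statement's English description precedes it below -/
import Mathlib

section
/- Let A be a monotone allocation rule, let p be an instance with allocation x = A(p), and let p' be an instance that agrees with p on the processing times of all machines other than i, and satisfies p'(i,j) > p(i,j) for every job j with x(i,j) = 0 and p'(i,j) < p(i,j) for every job j with x(i,j) = 1. Then the allocation x' = A(p') satisfies x'(i,j) = x(i,j) for every job j. -/
open scoped Classical
noncomputable section
variable {n m : ℕ}

/-- An allocation rule is monotone if, for every machine `i` and every two instances agreeing
outside machine `i`, the inner product of the change in `i`'s allocation with the change in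
`i`'s processing times is nonpositive. -/
def MonotoneAlloc (A : (Fin n → Fin m → ℝ) → (Fin m → Fin n)) : Prop :=
  ∀ (i : Fin n) (p p' : Fin n → Fin m → ℝ),
    (∀ i' j, 0 < p i' j) → (∀ i' j, 0 < p' i' j) →
    (∀ i' j, i' ≠ i → p i' j = p' i' j) →
    ∑ j, ((if A p j = i then (1 : ℝ) else 0) - (if A p' j = i then (1 : ℝ) else 0)) *
      (p i j - p' i j) ≤ 0

/-- Let `A` be a monotone allocation rule, and let `p'` agree with `p` on all
machines other than `i`, with `p'(i,j) > p(i,j)` for every job `j` not assigned to `i` by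
`A(p)` and `p'(i,j) < p(i,j)` for every job `j` assigned to `i` by `A(p)`. Then `A(p')` agrees
with `A(p)` on machine `i`'s row. -/
theorem monotone_allocation_stable
    (A : (Fin n → Fin m → ℝ) → (Fin m → Fin n)) (hmono : MonotoneAlloc A)
    (i : Fin n) (p p' : Fin n → Fin m → ℝ)
    (hp : ∀ i' j, 0 < p i' j) (hp' : ∀ i' j, 0 < p' i' j)
    (hagree : ∀ i' j, i' ≠ i → p i' j = p' i' j)
    (hup : ∀ j, A p j ≠ i → p i j < p' i j)
    (hdown : ∀ j, A p j = i → p' i j < p i j) :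
    ∀ j, (A p' j = i ↔ A p j = i) := by
  have h := hmono i p p' hp hp' hagree
  have hnn : ∀ j ∈ (Finset.univ : Finset (Fin m)),
      0 ≤ ((if A p j = i then (1 : ℝ) else 0) - (if A p' j = i then (1 : ℝ) else 0)) *
        (p i j - p' i j) := by
    intro j _
    by_cases h1 : A p j = i
    · have := hdown j h1
      by_cases h2 : A p' j = i <;> simp [h1, h2]
      linarith
    · have := hup j h1
      by_cases h2 : A p' j = i <;> simp [h1, h2]
      linarith
  have h0 := (Finset.sum_eq_zero_iff_of_nonneg hnn).1 (le_antisymm h (Finset.sum_nonneg hnn))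
  intro j
  have hj := h0 j (Finset.mem_univ j)
  by_cases h1 : A p j = i
  · have := hdown j h1
    by_cases h2 : A p' j = i
    · simp [h1, h2]
    · simp only [h1, h2, if_true, if_false] at hj
      linarith
  · have := hup j h1
    by_cases h2 : A p' j = i
    · simp only [h1, h2, if_true, if_false] at hj
      linarith
    · simp [h1, h2]
end
end

section
/- No deterministic strategyproof scheduling mechanism with 1-consistency can achieve any bounded robustness. Formally, for n = 2 machines and m = 2 jobs, let (p, p̂) ↦ x(p, p̂) be a deterministic allocation rule such that for every fixed prediction p̂ the rule p ↦ x(p, p̂) is monotone (so the mechanism is strategyproof), and which is 1-consistent, i.e., MS(p, x(p, p)) = OPT(p) for every instance p. Then for every β ≥ 1 there exist instances p and p̂ such that MS(p, x(p, p̂)) > β·OPT(p). -/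
open scoped Classical
noncomputable section
variable {n m : ℕ}

/-- The makespan of allocation `a` under instance `p`. -/
def MS [NeZero n] (p : Fin n → Fin m → ℝ) (a : Fin m → Fin n) : ℝ :=
  Finset.univ.sup' Finset.univ_nonempty fun i => ∑ j, if a j = i then p i j else 0

/-- The optimal makespan of instance `p`. -/
def OPT [NeZero n] (p : Fin n → Fin m → ℝ) : ℝ :=
  Finset.univ.inf' Finset.univ_nonempty fun a : Fin m → Fin n => MS p a

/-- No deterministic strategyproof scheduling mechanism with predictions
that is `1`-consistent can achieve any bounded robustness: for `n = m = 2`, if `x(·, p̂)` is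
monotone for every prediction `p̂` (so the mechanism is strategyproof) and
`MS(p, x(p,p)) = OPT(p)` for every `p` (1-consistency), then for every `β ≥ 1` there are
instances `p, p̂` with `MS(p, x(p,p̂)) > β·OPT(p)`. -/
theorem one_consistent_unbounded_robustness
    (x : (Fin 2 → Fin 2 → ℝ) → (Fin 2 → Fin 2 → ℝ) → (Fin 2 → Fin 2))
    (hmono : ∀ phat : Fin 2 → Fin 2 → ℝ, (∀ i j, 0 < phat i j) →
      MonotoneAlloc (fun p => x p phat))
    (hcons : ∀ p : Fin 2 → Fin 2 → ℝ, (∀ i j, 0 < p i j) → MS p (x p p) = OPT p) :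
    ∀ β : ℝ, 1 ≤ β → ∃ p phat : Fin 2 → Fin 2 → ℝ,
      (∀ i j, 0 < p i j) ∧ (∀ i j, 0 < phat i j) ∧
      β * OPT p < MS p (x p phat) := by
  intro β hβ
  obtain ⟨d, hd⟩ : ∃ d : ℝ, d = 1 / (4 * β) := ⟨_, rfl⟩
  have hd0 : 0 < d := by rw [hd]; positivity
  have hdb : β * d = 1 / 4 := by rw [hd]; field_simp
  have hd1 : d < 1 := by nlinarith
  have hq : ∀ i j, 0 < (![![1, d], ![2, 1]] : Fin 2 → Fin 2 → ℝ) i j := by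
    intro i j; fin_cases i <;> fin_cases j <;> simp [hd0]
  have hp : ∀ i j, 0 < (![![d, 2 * d], ![2, 1]] : Fin 2 → Fin 2 → ℝ) i j := by
    intro i j; fin_cases i <;> fin_cases j <;> simp [hd0]
  refine ⟨![![d, 2 * d], ![2, 1]], ![![1, d], ![2, 1]], hp, hq, ?_⟩
  have hc := hcons _ hq
  have hm := hmono _ hq 0 _ _ hp hq (by
    intro i j hi; fin_cases i <;> simp_all)
  beta_reduce at hm
  generalize x ![![1, d], ![2, 1]] ![![1, d], ![2, 1]] = a at hc hm
  generalize x ![![d, 2 * d], ![2, 1]] ![![1, d], ![2, 1]] = b at hm ⊢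
  have hle : MS ![![1, d], ![2, 1]] a ≤ 1 := by
    rw [hc]
    refine (Finset.inf'_le _ (Finset.mem_univ (![0, 1] : Fin 2 → Fin 2))).trans ?_
    apply Finset.sup'_le
    intro i _
    fin_cases i <;> simp
  have hl : ∀ i, (∑ j, if a j = i then (![![1, d], ![2, 1]] : Fin 2 → Fin 2 → ℝ) i j else 0) ≤ 1 :=
    fun i => (Finset.le_sup' (fun i => ∑ j, if a j = i then
      (![![1, d], ![2, 1]] : Fin 2 → Fin 2 → ℝ) i j else 0) (Finset.mem_univ i)).trans hle
  have h0 := hl 0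
  have h1 := hl 1
  have hop : OPT ![![d, 2 * d], ![2, 1]] ≤ 3 * d := by
    refine (Finset.inf'_le _ (Finset.mem_univ (![0, 0] : Fin 2 → Fin 2))).trans ?_
    apply Finset.sup'_le
    intro i _
    fin_cases i <;> simp <;> linarith
  have hlow : (∑ j, if b j = 1 then (![![d, 2 * d], ![2, 1]] : Fin 2 → Fin 2 → ℝ) 1 j else 0)
      ≤ MS ![![d, 2 * d], ![2, 1]] b :=
    Finset.le_sup' (fun i => ∑ j, if b j = i then
      (![![d, 2 * d], ![2, 1]] : Fin 2 → Fin 2 → ℝ) i j else 0) (Finset.mem_univ 1)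
  have hfin : β * OPT ![![d, 2 * d], ![2, 1]] ≤ 3 / 4 := by nlinarith
  refine lt_of_le_of_lt hfin (lt_of_lt_of_le ?_ hlow)
  simp only [Fin.sum_univ_two] at h0 h1 hm ⊢
  have e : ∀ k : Fin 2, k = 0 ∨ k = 1 := by decide
  rcases e (a 0) with h | h <;> rcases e (a 1) with h' | h' <;>
  rcases e (b 0) with g | g <;> rcases e (b 1) with g' | g' <;>
  simp [h, h', g, g'] at h0 h1 hm ⊢ <;> first | linarith | norm_num
end
end
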